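/- Let B ≥ 2 and let ψ be a normalized locally maximally entangled state for dimensions (2, B, B). Then there exist unitary matrices U₁ ∈ U(2), U₂, U₃ ∈ U(B) and functions θ, φ : Fin B → ℝ with ∑_i cos (θ i) = 0, ∑_i sin (θ i) cos (φ i) = 0, ∑_i sin (θ i) sin (φ i) = 0, such that ψ(a,b,c) = ∑_{a',b',c'} U₁ a a' · U₂ b b' · U₃ c c' · ψ₀(a',b',c'), where ψ₀ is the state with ψ₀(0, i, i) = (1/√B) cos (θ i / 2), ψ₀(1, i, i) = (1/√B) exp(I · φ i) sin (θ i / 2), and ψ₀ = 0 whenever the second and third indices differ. -/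

import Mathlib

open scoped ComplexConjugate

noncomputable section

def rho1 {A B C : ℕ} (ψ : Fin A × Fin B × Fin C → ℂ) : Matrix (Fin A) (Fin A) ℂ :=
  Matrix.of fun a a' => ∑ b, ∑ c, ψ (a, b, c) * conj (ψ (a', b, c))

def rho2 {A B C : ℕ} (ψ : Fin A × Fin B × Fin C → ℂ) : Matrix (Fin B) (Fin B) ℂ :=
  Matrix.of fun b b' => ∑ a, ∑ c, ψ (a, b, c) * conj (ψ (a, b', c))

def rho3 {A B C : ℕ} (ψ : Fin A × Fin B × Fin C → ℂ) : Matrix (Fin C) (Fin C) ℂ :=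
  Matrix.of fun c c' => ∑ a, ∑ b, ψ (a, b, c) * conj (ψ (a, b, c'))

def TriNormalized {A B C : ℕ} (ψ : Fin A × Fin B × Fin C → ℂ) : Prop :=
  ∑ x, ‖ψ x‖ ^ 2 = 1

def TriIsLME {A B C : ℕ} (ψ : Fin A × Fin B × Fin C → ℂ) : Prop :=
  TriNormalized ψ ∧ rho1 ψ = (1 / (A : ℂ)) • 1 ∧
    rho2 ψ = (1 / (B : ℂ)) • 1 ∧ rho3 ψ = (1 / (C : ℂ)) • 1

def TriLMEExists (A B C : ℕ) : Prop := ∃ ψ : Fin A × Fin B × Fin C → ℂ, TriIsLME ψ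

/-- The diagonal (2,B,B) state determined by angles θ, φ. -/
def psi0 (B : ℕ) (θ φ : Fin B → ℝ) : Fin 2 × Fin B × Fin B → ℂ :=
  fun x =>
    if x.2.1 = x.2.2 then
      (if x.1 = 0 then (((1 / Real.sqrt B) * Real.cos (θ x.2.1 / 2) : ℝ) : ℂ)
       else ((1 / Real.sqrt B : ℝ) : ℂ) * Complex.exp (Complex.I * (φ x.2.1 : ℝ)) *
         ((Real.sin (θ x.2.1 / 2) : ℝ) : ℂ))
    else 0

open scoped Matrix

/-!
Up to the factor `√B`, the slices `X₀`, `X₁` of `ψ` along the first index satisfy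
`∑ₐ Xₐ Xₐᴴ = 1 = ∑ₐ Xₐᴴ Xₐ`. Write `X₀ = P W` in polar form and `X₁ = Q W`. Then
`P² + Q Qᴴ = 1 = P² + Qᴴ Q`, so `Q` is normal, say `Q = U diag(z) Uᴴ`, and uniqueness of
positive square roots forces `P = U diag(√(1 - |z|²)) Uᴴ`. Hence a single pair of unitaries,
`U` on the left and `Uᴴ W` on the right, diagonalises both slices, and the `i`-th diagonal entries
form the qubit state `(√(1 - |zᵢ|²), zᵢ)`, a point on the Bloch sphere. Since `ρ₁` is unchanged by
unitaries on the other two factors, `ρ₁ = 1/2` says that these Bloch vectors sum to zero.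
-/

section Operators

theorem exists_orthonormalBasis_forall_apply_eq_smul {n E : Type*} [Fintype n]
    [NormedAddCommGroup E] [InnerProductSpace ℂ E] [FiniteDimensional ℂ E]
    (hn : Module.finrank ℂ E = Fintype.card n) (T : E →ₗ[ℂ] E) [IsStarNormal T] :
    ∃ (b : OrthonormalBasis n ℂ E) (μ : n → ℂ), ∀ i, T (b i) = μ i • b i := by
  classical
  have hre : (realPart T : E →ₗ[ℂ] E).IsSymmetric :=
    (LinearMap.isSymmetric_iff_isSelfAdjoint _).mpr (realPart T).2
  have him : (imaginaryPart T : E →ₗ[ℂ] E).IsSymmetric :=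
    (LinearMap.isSymmetric_iff_isSelfAdjoint _).mpr (imaginaryPart T).2
  have hfamily := hre.orthogonalFamily_eigenspace_inf_eigenspace him
  have hinternal := LinearMap.IsSymmetric.directSum_isInternal_of_commute hre him
    (Commute.realPart_imaginaryPart T)
  have := hinternal.submodule_iSupIndep.fintypeNeBotOfFiniteDimensional
  rw [← DirectSum.isInternal_ne_bot_iff] at hinternal
  replace hfamily := hfamily.comp <| Subtype.val_injective (p := fun i : ℂ × ℂ ↦
    Module.End.eigenspace (realPart T : E →ₗ[ℂ] E) i.2 ⊓
      Module.End.eigenspace (imaginaryPart T : E →ₗ[ℂ] E) i.1 ≠ ⊥)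
  let e := Fintype.equivFin n
  let b := hinternal.subordinateOrthonormalBasis hn hfamily
  let ν := fun i ↦ (hinternal.subordinateOrthonormalBasisIndex hn (e i) hfamily).1
  -- The indexing pairs list the eigenvalue of the imaginary part first.
  refine ⟨b.reindex e.symm, fun i ↦ (ν i).2 + Complex.I * (ν i).1, fun i ↦ ?_⟩
  obtain ⟨hbre, hbim⟩ := hinternal.subordinateOrthonormalBasis_subordinate hn (e i) hfamily
  rw [SetLike.mem_coe, Module.End.mem_eigenspace_iff] at hbre hbim
  calc T (b.reindex e.symm i)
      = (realPart T : E →ₗ[ℂ] E) (b (e i)) +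
          Complex.I • (imaginaryPart T : E →ₗ[ℂ] E) (b (e i)) := by
        conv_lhs => rw [← realPart_add_I_smul_imaginaryPart T]
        simp
    _ = _ := by simp [b, ν, hbre, hbim, add_smul, mul_smul]

theorem exists_linearIsometryEquiv_forall_eq_of_norm_eq {𝕜 E F : Type*} [RCLike 𝕜]
    [AddCommGroup E] [Module 𝕜 E]
    [NormedAddCommGroup F] [InnerProductSpace 𝕜 F] [FiniteDimensional 𝕜 F]
    (f g : E →ₗ[𝕜] F) (hfg : ∀ v, ‖f v‖ = ‖g v‖) : ∃ U : F ≃ₗᵢ[𝕜] F, ∀ v, f v = U (g v) := by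
  -- `f ∘ g⁻¹` is a well-defined isometry on the range of `g`; extend it to all of `F`.
  obtain ⟨s, hs⟩ := g.rangeRestrict.exists_rightInverse_of_surjective g.range_rangeRestrict
  have hgs (y : g.range) : g (s y) = y := congr(($hs y : F))
  let L : g.range →ₗᵢ[𝕜] F := ⟨f ∘ₗ s, fun y ↦ by simp [hfg, hgs]⟩
  refine ⟨L.extend.toLinearIsometryEquiv rfl, fun v ↦ ?_⟩
  have hker : f (v - s (g.rangeRestrict v)) = 0 := by
    rw [← norm_eq_zero, hfg, map_sub, hgs, LinearMap.codRestrict_apply, sub_self, norm_zero]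
  calc f v = L (g.rangeRestrict v) := by rwa [map_sub, sub_eq_zero] at hker
    _ = L.extend (g v) := (L.extend_apply _).symm

end Operators

section Matrices

open Matrix

open scoped MatrixOrder ComplexOrder

variable {𝕜 m n : Type*} [RCLike 𝕜] [Fintype n]

theorem norm_toEuclideanLin_apply_sq [Fintype m] [DecidableEq m] (A : Matrix n m 𝕜)
    (v : EuclideanSpace 𝕜 m) :
    (‖A.toEuclideanLin v‖ : 𝕜) ^ 2 = inner 𝕜 v ((Aᴴ * A).toEuclideanLin v) := by
  classical
  rw [← inner_self_eq_norm_sq_to_K, ← LinearMap.adjoint_inner_right,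
    ← toEuclideanLin_conjTranspose_eq_adjoint, toLpLin_mul_same, LinearMap.comp_apply]

theorem eq_of_posSemidef_of_mul_self_eq {P Q : Matrix n n 𝕜} (hP : P.PosSemidef)
    (hQ : Q.PosSemidef) (h : P * P = Q * Q) : P = Q := by
  classical
  rw [← CFC.sqrt_mul_self P hP.nonneg, h, CFC.sqrt_mul_self Q hQ.nonneg]

variable [DecidableEq n]

theorem exists_mem_unitaryGroup_eq_mul_diagonal_mul (A : Matrix n n ℂ) [IsStarNormal A] :
    ∃ U ∈ unitaryGroup n ℂ, ∃ μ : n → ℂ, A = U * diagonal μ * Uᴴ := by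
  let e := EuclideanSpace.basisFun n ℂ
  let T := (LinearMap.toMatrixOrthonormal e).symm A
  obtain ⟨b, μ, hb⟩ := exists_orthonormalBasis_forall_apply_eq_smul finrank_euclideanSpace T
  let U := e.toBasis.toMatrix b.toBasis
  have hU : U ∈ unitaryGroup n ℂ := by
    simpa [U] using e.toMatrix_orthonormalBasis_mem_unitary b
  have hA : LinearMap.toMatrix e.toBasis e.toBasis T = A :=
    (LinearMap.toMatrixOrthonormal e).apply_symm_apply A
  have hμ : LinearMap.toMatrix b.toBasis b.toBasis T = diagonal μ := by
    ext i j
    rcases eq_or_ne i j with rfl | hij <;> simp [LinearMap.toMatrix_apply, *]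
  have hAU : A * U = U * diagonal μ := by
    rw [← hA, ← hμ, linearMap_toMatrix_mul_basis_toMatrix, basis_toMatrix_mul_linearMap_toMatrix]
  refine ⟨U, hU, μ, ?_⟩
  rw [← hAU, mul_assoc, ← star_eq_conjTranspose, mem_unitaryGroup_iff.mp hU, mul_one]

theorem exists_mem_unitaryGroup_eq_mul_of_conjTranspose_mul_self_eq [Finite m]
    {A B : Matrix n m 𝕜} (h : Aᴴ * A = Bᴴ * B) : ∃ U ∈ unitaryGroup n 𝕜, A = U * B := by
  classical
  have := Fintype.ofFinite m
  have hnorm (v : EuclideanSpace 𝕜 m) : ‖A.toEuclideanLin v‖ = ‖B.toEuclideanLin v‖ := by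
    rw [← sq_eq_sq₀ (norm_nonneg _) (norm_nonneg _), ← RCLike.ofReal_inj (K := 𝕜)]
    push_cast
    rw [norm_toEuclideanLin_apply_sq, norm_toEuclideanLin_apply_sq, h]
  obtain ⟨U, hU⟩ := exists_linearIsometryEquiv_forall_eq_of_norm_eq _ _ hnorm
  let e := EuclideanSpace.basisFun n 𝕜
  let e' := EuclideanSpace.basisFun m 𝕜
  have hAB : A.toEuclideanLin = U.toLinearMap ∘ₗ B.toEuclideanLin := LinearMap.ext hU
  refine ⟨_, U.toMatrix_mem_unitaryGroup e e, ?_⟩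
  apply_fun LinearMap.toMatrix e'.toBasis e.toBasis at hAB
  rw [LinearMap.toMatrix_comp _ e.toBasis] at hAB
  simpa [e, e', toEuclideanLin_eq_toLin_orthonormal] using hAB

theorem exists_posSemidef_mul_mem_unitaryGroup_eq (A : Matrix n n 𝕜) :
    ∃ P : Matrix n n 𝕜, P.PosSemidef ∧ ∃ U ∈ unitaryGroup n 𝕜, A = P * U := by
  obtain ⟨P, hP, hPP⟩ : ∃ P : Matrix n n 𝕜, P.PosSemidef ∧ P * P = A * Aᴴ :=
    ⟨_, (CFC.sqrt_nonneg (A * Aᴴ)).posSemidef,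
      CFC.sqrt_mul_sqrt_self _ (posSemidef_self_mul_conjTranspose A).nonneg⟩
  obtain ⟨U, hU, hAU⟩ : ∃ U ∈ unitaryGroup n 𝕜, Aᴴ = U * P :=
    exists_mem_unitaryGroup_eq_mul_of_conjTranspose_mul_self_eq <| by
      rw [hP.isHermitian.eq, hPP, conjTranspose_conjTranspose]
  refine ⟨P, hP, Uᴴ, Unitary.star_mem hU, ?_⟩
  rw [← conjTranspose_inj, hAU, conjTranspose_mul, hP.isHermitian.eq, conjTranspose_conjTranspose]

theorem exists_mem_unitaryGroup_eq_mul_diagonal_sqrt_mul_of_mul_self_add_eq_one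
    {P Q : Matrix n n ℂ} (hP : P.PosSemidef) (hleft : P * P + Q * Qᴴ = 1)
    (hright : P * P + Qᴴ * Q = 1) :
    ∃ U ∈ unitaryGroup n ℂ, ∃ z : n → ℂ, (∀ i, ‖z i‖ ≤ 1) ∧
      P = U * diagonal (fun i ↦ (√(1 - ‖z i‖ ^ 2) : ℂ)) * Uᴴ ∧ Q = U * diagonal z * Uᴴ := by
  have : IsStarNormal Q := ⟨add_left_cancel (hright.trans hleft.symm)⟩
  obtain ⟨U, hU, z, hQ⟩ := exists_mem_unitaryGroup_eq_mul_diagonal_mul Q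
  let conjU := Unitary.conjStarAlgAut ℂ (Matrix n n ℂ) ⟨U, hU⟩
  replace hQ : Q = conjU (diagonal z) := hQ
  have hPP : P * P = conjU (diagonal fun i ↦ 1 - (‖z i‖ : ℂ) ^ 2) := by
    rw [eq_sub_of_add_eq hleft, hQ, ← star_eq_conjTranspose, ← map_star, ← map_mul,
      ← map_one conjU, ← map_sub, ← diagonal_one, star_eq_conjTranspose, diagonal_conjTranspose,
      diagonal_mul_diagonal, diagonal_sub]
    simp [Complex.mul_conj']
  have hz (i : n) : 0 ≤ 1 - ‖z i‖ ^ 2 := by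
    have hpos : (conjU.symm (P * P)).PosSemidef :=
      (sq P ▸ hP.pow 2).conjTranspose_mul_mul_same U
    rw [hPP, conjU.symm_apply_apply, posSemidef_diagonal_iff] at hpos
    exact_mod_cast hpos i
  have hsqrt : (conjU (diagonal fun i ↦ (√(1 - ‖z i‖ ^ 2) : ℂ))).PosSemidef :=
    (posSemidef_diagonal_iff.mpr fun i ↦ by simp).mul_mul_conjTranspose_same U
  have hsqrt_mul_self : P * P = conjU (diagonal fun i ↦ (√(1 - ‖z i‖ ^ 2) : ℂ)) *
      conjU (diagonal fun i ↦ (√(1 - ‖z i‖ ^ 2) : ℂ)) := by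
    rw [hPP, ← map_mul, diagonal_mul_diagonal]
    congr! 3 with i
    exact_mod_cast (Real.mul_self_sqrt (hz i)).symm
  exact ⟨U, hU, z, fun i ↦ by simpa using hz i,
    eq_of_posSemidef_of_mul_self_eq hP hsqrt hsqrt_mul_self, hQ⟩

end Matrices

section Bloch

open Matrix

/-- The unit vector of `ℂ²` with polar angle `θ` and azimuthal angle `φ` on the Bloch sphere.
Up to the factor `1 / √B`, the diagonal amplitudes of `psi0 B θ φ` are `blochKet (θ i) (φ i)`. -/
def blochKet (θ φ : ℝ) : Fin 2 → ℂ :=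
  ![Real.cos (θ / 2), Complex.exp (Complex.I * φ) * Real.sin (θ / 2)]

theorem exists_blochKet_eq {z : ℂ} (hz : ‖z‖ ≤ 1) :
    ∃ θ φ : ℝ, blochKet θ φ = ![(√(1 - ‖z‖ ^ 2) : ℂ), z] := by
  refine ⟨2 * Real.arcsin ‖z‖, z.arg, ?_⟩
  rw [blochKet, mul_div_cancel_left₀ _ two_ne_zero, Real.cos_arcsin,
    Real.sin_arcsin (by linarith [norm_nonneg z]) hz, mul_comm Complex.I, mul_comm,
    Complex.norm_mul_exp_arg_mul_I]

theorem blochKet_zero_mul_conj_sub_blochKet_one_mul_conj (θ φ : ℝ) :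
    blochKet θ φ 0 * conj (blochKet θ φ 0) - blochKet θ φ 1 * conj (blochKet θ φ 1) =
      Real.cos θ := by
  have h₀ : ‖blochKet θ φ 0‖ = |Real.cos (θ / 2)| := Complex.norm_real _
  have h₁ : ‖blochKet θ φ 1‖ = |Real.sin (θ / 2)| := by
    have hexp : ‖Complex.exp (Complex.I * φ)‖ = 1 := by
      rw [mul_comm, Complex.norm_exp_ofReal_mul_I]
    calc ‖blochKet θ φ 1‖ = ‖Complex.exp (Complex.I * φ)‖ * ‖(Real.sin (θ / 2) : ℂ)‖ := norm_mul ..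
      _ = |Real.sin (θ / 2)| := by rw [hexp, one_mul, Complex.norm_real, Real.norm_eq_abs]
  rw [Complex.mul_conj', Complex.mul_conj', h₀, h₁]
  norm_cast
  rw [sq_abs, sq_abs, ← Real.cos_two_mul', mul_div_cancel₀ θ two_ne_zero]

theorem blochKet_one_mul_conj_blochKet_zero (θ φ : ℝ) :
    blochKet θ φ 1 * conj (blochKet θ φ 0) =
      (Real.sin θ * Real.cos φ : ℝ) / 2 + (Real.sin θ * Real.sin φ : ℝ) / 2 * Complex.I := by
  have hsin : Real.sin θ = 2 * Real.sin (θ / 2) * Real.cos (θ / 2) := by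
    rw [← Real.sin_two_mul, mul_div_cancel₀ θ two_ne_zero]
  calc blochKet θ φ 1 * conj (blochKet θ φ 0)
      = Complex.exp (φ * Complex.I) * Real.sin (θ / 2) * Real.cos (θ / 2) := by
        rw [mul_comm (φ : ℂ), ← Complex.conj_ofReal (Real.cos (θ / 2))]
        rfl
    _ = _ := by
        rw [Complex.exp_mul_I, hsin]
        push_cast
        ring

open scoped ComplexOrder in
theorem exists_mem_unitaryGroup_forall_eq_mul_diagonal_blochKet_mul
    {n : Type*} [Fintype n] [DecidableEq n] {X : Fin 2 → Matrix n n ℂ}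
    (hleft : ∑ a, X a * (X a)ᴴ = 1) (hright : ∑ a, (X a)ᴴ * X a = 1) :
    ∃ U ∈ unitaryGroup n ℂ, ∃ V ∈ unitaryGroup n ℂ, ∃ θ φ : n → ℝ,
      ∀ a, X a = U * diagonal (fun i ↦ blochKet (θ i) (φ i) a) * V := by
  obtain ⟨P, hP, W, hW, hX₀⟩ := exists_posSemidef_mul_mem_unitaryGroup_eq (X 0)
  have hPP : Pᴴ = P := hP.isHermitian
  have hWW : W * Wᴴ = 1 := mem_unitaryGroup_iff.mp hW
  obtain ⟨Q, hX₁⟩ : ∃ Q, X 1 = Q * W :=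
    ⟨X 1 * Wᴴ, by rw [mul_assoc, ← star_eq_conjTranspose, mem_unitaryGroup_iff'.mp hW, mul_one]⟩
  replace hleft : P * P + Q * Qᴴ = 1 := by
    rw [Fin.sum_univ_two, hX₀, hX₁] at hleft
    simpa only [conjTranspose_mul, mul_assoc, ← mul_assoc W, hWW, one_mul, hPP] using hleft
  replace hright : P * P + Qᴴ * Q = 1 := by
    have hconj : Wᴴ * (P * P + Qᴴ * Q) * W = 1 := by
      simpa only [Fin.sum_univ_two, hX₀, hX₁, conjTranspose_mul, hPP, mul_add, add_mul, mul_assoc]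
        using hright
    calc P * P + Qᴴ * Q = W * (Wᴴ * (P * P + Qᴴ * Q) * W) * Wᴴ := by
          simp only [mul_assoc, hWW, mul_one, ← mul_assoc W, one_mul]
      _ = 1 := by rw [hconj, mul_one, hWW]
  obtain ⟨U, hU, z, hz, hPU, hQU⟩ :=
    exists_mem_unitaryGroup_eq_mul_diagonal_sqrt_mul_of_mul_self_add_eq_one hP hleft hright
  choose θ φ hθφ using fun i ↦ exists_blochKet_eq (hz i)
  refine ⟨U, hU, Uᴴ * W, mul_mem (Unitary.star_mem hU) hW, θ, φ, ?_⟩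
  simp [Fin.forall_fin_two, hθφ, hX₀, hX₁, hPU, hQU, mul_assoc]

end Bloch

section Slices

open Matrix

/-- The matrix of coefficients of `ψ` with fixed first index `a`. In terms of the slices, a local
operation on the last two factors is a two-sided matrix multiplication. -/
def slice {α β γ R : Type*} (ψ : α × β × γ → R) (a : α) : Matrix β γ R :=
  of fun b c ↦ ψ (a, b, c)

variable {A B C : ℕ}

theorem rho1_apply_eq_trace (ψ : Fin A × Fin B × Fin C → ℂ) (a a' : Fin A) :
    rho1 ψ a a' = (slice ψ a * (slice ψ a')ᴴ).trace :=
  rfl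

theorem rho2_eq_sum (ψ : Fin A × Fin B × Fin C → ℂ) :
    rho2 ψ = ∑ a, slice ψ a * (slice ψ a)ᴴ := by
  ext b b'
  simp [rho2, slice, Matrix.sum_apply, mul_apply]

theorem rho3_transpose_eq_sum (ψ : Fin A × Fin B × Fin C → ℂ) :
    (rho3 ψ)ᵀ = ∑ a, (slice ψ a)ᴴ * slice ψ a := by
  ext c c'
  simp [rho3, slice, Matrix.sum_apply, mul_apply, mul_comm]

theorem rho1_eq_of_slice_eq_mul_mul {ψ χ : Fin A × Fin B × Fin C → ℂ}
    {U : Matrix (Fin B) (Fin B) ℂ} {V : Matrix (Fin C) (Fin C) ℂ}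
    (hU : U ∈ unitaryGroup (Fin B) ℂ) (hV : V ∈ unitaryGroup (Fin C) ℂ)
    (h : ∀ a, slice ψ a = U * slice χ a * V) : rho1 ψ = rho1 χ := by
  have hUU : Uᴴ * U = 1 := mem_unitaryGroup_iff'.mp hU
  have hVV : V * Vᴴ = 1 := mem_unitaryGroup_iff.mp hV
  ext a a'
  rw [rho1_apply_eq_trace, rho1_apply_eq_trace, h, h]
  calc (U * slice χ a * V * (U * slice χ a' * V)ᴴ).trace
      = (U * (slice χ a * (V * Vᴴ) * (slice χ a')ᴴ) * Uᴴ).trace := by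
        simp only [conjTranspose_mul, Matrix.mul_assoc]
    _ = (slice χ a * (slice χ a')ᴴ).trace := by
        rw [trace_mul_comm, ← mul_assoc, hUU, hVV, one_mul, Matrix.mul_one]

theorem sum_mul_mul_mul_eq_sum_smul_slice {α β γ α' β' γ' R : Type*} [Fintype α'] [Fintype β']
    [Fintype γ'] [CommSemiring R] (χ : α' × β' × γ' → R) (U₁ : Matrix α α' R)
    (U₂ : Matrix β β' R) (U₃ : Matrix γ γ' R) (a : α) (b : β) (c : γ) :
    ∑ a', ∑ b', ∑ c', U₁ a a' * U₂ b b' * U₃ c c' * χ (a', b', c') =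
      (∑ a', U₁ a a' • (U₂ * slice χ a' * U₃ᵀ)) b c := by
  simp only [Matrix.sum_apply, Matrix.smul_apply, mul_apply, Finset.sum_mul, Finset.smul_sum]
  refine Finset.sum_congr rfl fun a' _ ↦ Finset.sum_comm.trans ?_
  refine Finset.sum_congr rfl fun c' _ ↦ Finset.sum_congr rfl fun b' _ ↦ ?_
  simp only [slice, of_apply, transpose_apply, smul_eq_mul]
  ring

theorem slice_psi0 (θ φ : Fin B → ℝ) (a : Fin 2) :
    slice (psi0 B θ φ) a = ((1 / √B : ℝ) : ℂ) • diagonal fun i ↦ blochKet (θ i) (φ i) a := by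
  ext i j
  fin_cases a <;> rcases eq_or_ne i j with rfl | hij <;>
    simp [slice, psi0, blochKet, mul_assoc, *]

theorem rho1_psi0_apply (θ φ : Fin B → ℝ) (a a' : Fin 2) :
    rho1 (psi0 B θ φ) a a' =
      (1 / B : ℂ) * ∑ i, blochKet (θ i) (φ i) a * conj (blochKet (θ i) (φ i) a') := by
  have hB : ((1 / √B : ℝ) : ℂ) * ((1 / √B : ℝ) : ℂ) = 1 / B := by
    norm_cast
    rw [div_mul_div_comm, Real.mul_self_sqrt B.cast_nonneg, one_mul]
    push_cast
    rfl
  rw [rho1_apply_eq_trace, slice_psi0, slice_psi0, conjTranspose_smul, smul_mul_smul_comm,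
    diagonal_conjTranspose, diagonal_mul_diagonal, trace_smul, trace_diagonal, RCLike.star_def,
    Complex.conj_ofReal, hB]
  rfl

theorem sum_bloch_eq_zero_of_rho1_psi0_eq_smul_one (hB : B ≠ 0) {θ φ : Fin B → ℝ} {c : ℂ}
    (h : rho1 (psi0 B θ φ) = c • 1) :
    ∑ i, Real.cos (θ i) = 0 ∧ ∑ i, Real.sin (θ i) * Real.cos (φ i) = 0 ∧
      ∑ i, Real.sin (θ i) * Real.sin (φ i) = 0 := by
  have hB' : (1 / B : ℂ) ≠ 0 := by simpa
  have hdiag : rho1 (psi0 B θ φ) 0 0 - rho1 (psi0 B θ φ) 1 1 = 0 := by simp [h]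
  have hoff : rho1 (psi0 B θ φ) 1 0 = 0 := by simp [h]
  rw [rho1_psi0_apply, rho1_psi0_apply, ← mul_sub, ← Finset.sum_sub_distrib] at hdiag
  simp only [blochKet_zero_mul_conj_sub_blochKet_one_mul_conj, mul_eq_zero, hB', false_or] at hdiag
  rw [rho1_psi0_apply] at hoff
  simp only [blochKet_one_mul_conj_blochKet_zero, mul_eq_zero, hB', false_or] at hoff
  rw [Finset.sum_add_distrib, ← Finset.sum_mul, ← Finset.sum_div, ← Finset.sum_div,
    ← Complex.ofReal_sum, ← Complex.ofReal_sum] at hoff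
  refine ⟨by exact_mod_cast hdiag, ?_⟩
  simpa [Complex.ext_iff, -Complex.ofReal_sin, -Complex.ofReal_cos] using hoff

theorem TriIsLME.exists_slice_eq_mul_slice_psi0_mul (hB : B ≠ 0)
    {ψ : Fin 2 × Fin B × Fin B → ℂ} (hψ : TriIsLME ψ) :
    ∃ U ∈ unitaryGroup (Fin B) ℂ, ∃ V ∈ unitaryGroup (Fin B) ℂ, ∃ θ φ : Fin B → ℝ,
      ∀ a, slice ψ a = U * slice (psi0 B θ φ) a * V := by
  obtain ⟨-, -, h₂, h₃⟩ := hψ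
  have hsqrt : (√B : ℂ) * √B = B := by exact_mod_cast Real.mul_self_sqrt B.cast_nonneg
  have hB' : (B : ℂ) ≠ 0 := by simpa
  have hsqrt_ne : (√B : ℂ) ≠ 0 := by simpa
  have hleft : ∑ a, ((√B : ℂ) • slice ψ a) * ((√B : ℂ) • slice ψ a)ᴴ = 1 := by
    simp only [conjTranspose_smul, smul_mul_smul_comm, RCLike.star_def, Complex.conj_ofReal, hsqrt,
      ← Finset.smul_sum, ← rho2_eq_sum, h₂, smul_smul]
    rw [mul_one_div_cancel hB', one_smul]
  have hright : ∑ a, ((√B : ℂ) • slice ψ a)ᴴ * ((√B : ℂ) • slice ψ a) = 1 := by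
    simp only [conjTranspose_smul, smul_mul_smul_comm, RCLike.star_def, Complex.conj_ofReal, hsqrt,
      ← Finset.smul_sum, ← rho3_transpose_eq_sum, h₃, transpose_smul, transpose_one, smul_smul]
    rw [mul_one_div_cancel hB', one_smul]
  obtain ⟨U, hU, V, hV, θ, φ, h⟩ :=
    exists_mem_unitaryGroup_forall_eq_mul_diagonal_blochKet_mul hleft hright
  refine ⟨U, hU, V, hV, θ, φ, fun a ↦ smul_right_injective _ hsqrt_ne ?_⟩
  simp [h, slice_psi0, smul_smul, hsqrt_ne]

end Slices

/-- every LME state for dimensions (2, B, B) is obtained from a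
diagonal state `psi0` by local unitary transformations. -/
theorem lme_2BB_classification (B : ℕ) (hB : 2 ≤ B)
    (ψ : Fin 2 × Fin B × Fin B → ℂ) (hψ : TriIsLME ψ) :
    ∃ (U₁ : Matrix (Fin 2) (Fin 2) ℂ) (U₂ U₃ : Matrix (Fin B) (Fin B) ℂ)
      (θ φ : Fin B → ℝ),
      (U₁ * U₁ᴴ = 1 ∧ U₁ᴴ * U₁ = 1) ∧
      (U₂ * U₂ᴴ = 1 ∧ U₂ᴴ * U₂ = 1) ∧
      (U₃ * U₃ᴴ = 1 ∧ U₃ᴴ * U₃ = 1) ∧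
      (∑ i, Real.cos (θ i) = 0) ∧
      (∑ i, Real.sin (θ i) * Real.cos (φ i) = 0) ∧
      (∑ i, Real.sin (θ i) * Real.sin (φ i) = 0) ∧
      ∀ a b c, ψ (a, b, c) =
        ∑ a', ∑ b', ∑ c', U₁ a a' * U₂ b b' * U₃ c c' * psi0 B θ φ (a', b', c') := by
  have hB₀ : B ≠ 0 := by lia
  obtain ⟨U, hU, V, hV, θ, φ, hslice⟩ := hψ.exists_slice_eq_mul_slice_psi0_mul hB₀
  have hrho : rho1 (psi0 B θ φ) = (1 / (2 : ℕ) : ℂ) • 1 :=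
    (rho1_eq_of_slice_eq_mul_mul hU hV hslice).symm.trans hψ.2.1
  obtain ⟨hz, hx, hy⟩ := sum_bloch_eq_zero_of_rho1_psi0_eq_smul_one hB₀ hrho
  have hVt : Vᵀ ∈ Matrix.unitaryGroup (Fin B) ℂ := Matrix.transpose_mem_unitaryGroup_iff.mpr hV
  refine ⟨1, U, Vᵀ, θ, φ, by simp, (Unitary.mem_iff.mp hU).symm, (Unitary.mem_iff.mp hVt).symm,
    hz, hx, hy, fun a b c ↦ ?_⟩
  calc ψ (a, b, c) = (U * slice (psi0 B θ φ) a * V) b c := congr($(hslice a) b c)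
    _ = _ := by rw [sum_mul_mul_mul_eq_sum_smul_slice]; simp [Matrix.one_apply]
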